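/- arXiv:1901.03799 — 3 statements merged into one kernel-verified Lean document; each statement's English description precedes it below -/
import Mathlib

section
/- Let (F_i, v_i), i ∈ {1,…,m}, be c-fusion woven for H with universal bounds A and B, and let U be a bounded invertible linear operator on H. Then (U F_i(·), v_i), i ∈ {1,…,m}, is c-fusion woven for H: for every partition {σ_i}_{i=1}^m of X into pairwise disjoint measurable sets and every h ∈ H, A‖U⁻¹‖⁻²‖U‖⁻²‖h‖² ≤ Σ_{i=1}^m ∫_{σ_i} v_i(x)²‖π_{U F_i(x)}h‖² dμ(x) ≤ B‖U⁻¹‖²‖U‖²‖h‖². -/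
open MeasureTheory

/-- The orthogonal projection of `h` onto the closed subspace `K` of a Hilbert space. -/
noncomputable def cProj {H : Type*} [NormedAddCommGroup H] [InnerProductSpace ℂ H]
    [CompleteSpace H] (K : Submodule ℂ H) (hK : IsClosed (K : Set H)) (h : H) : H :=
  haveI : CompleteSpace K := hK.completeSpace_coe
  (Submodule.orthogonalProjectionOnto K h : H)

/-- The image of a closed subspace under a topological linear isomorphism is closed. -/
theorem isClosed_map_equiv {H : Type*} [NormedAddCommGroup H] [InnerProductSpace ℂ H]
    [CompleteSpace H] (U : H ≃L[ℂ] H) (K : Submodule ℂ H) (hK : IsClosed (K : Set H)) :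
    IsClosed ((K.map (U : H →ₗ[ℂ] H) : Submodule ℂ H) : Set H) := by
  rw [Submodule.map_coe]
  exact U.toHomeomorph.isClosedMap _ hK


section helpers

variable {X : Type*} [MeasurableSpace X] {μ : Measure X}
  {H : Type*} [NormedAddCommGroup H] [InnerProductSpace ℂ H] [CompleteSpace H]

/-- The orthogonal projection as a continuous linear map. -/
noncomputable def prL (K : Submodule ℂ H) (hK : IsClosed (K : Set H)) : H →L[ℂ] H :=
  haveI : CompleteSpace K := hK.completeSpace_coe
  K.starProjection

theorem cProj_eq_prL (K : Submodule ℂ H) (hK : IsClosed (K : Set H)) (h : H) :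
    cProj K hK h = prL K hK h := rfl

theorem prL_mem (K : Submodule ℂ H) (hK : IsClosed (K : Set H)) (h : H) : prL K hK h ∈ K := by
  haveI : CompleteSpace K := hK.completeSpace_coe
  exact K.starProjection_apply_mem h

theorem prL_norm_le (K : Submodule ℂ H) (hK : IsClosed (K : Set H)) (h : H) :
    ‖prL K hK h‖ ≤ ‖h‖ := by
  haveI : CompleteSpace K := hK.completeSpace_coe
  exact K.norm_starProjection_apply_le h

theorem prL_of_mem (K : Submodule ℂ H) (hK : IsClosed (K : Set H)) (h : H) (hh : h ∈ K) :
    prL K hK h = h := by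
  haveI : CompleteSpace K := hK.completeSpace_coe
  exact Submodule.starProjection_eq_self_iff.2 hh

theorem prL_eq_zero (K : Submodule ℂ H) (hK : IsClosed (K : Set H)) (h : H)
    (hh : ∀ k ∈ K, inner ℂ k h = 0) : prL K hK h = 0 := by
  haveI : CompleteSpace K := hK.completeSpace_coe
  exact (Submodule.starProjection_apply_eq_zero_iff (K := K)).2 ((Submodule.mem_orthogonal K h).2 hh)

theorem prL_inner (K : Submodule ℂ H) (hK : IsClosed (K : Set H)) (h k : H) (hk : k ∈ K) :
    inner ℂ k (h - prL K hK h) = 0 := by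
  haveI : CompleteSpace K := hK.completeSpace_coe
  exact (Submodule.mem_orthogonal K _).1 (K.sub_starProjection_mem_orthogonal h) k hk

theorem prL_adj_eq (U : H ≃L[ℂ] H) (K : Submodule ℂ H) (hK : IsClosed (K : Set H)) (h : H) :
    prL K hK (ContinuousLinearMap.adjoint (U : H →L[ℂ] H)
      (h - prL _ (isClosed_map_equiv U K hK) h)) = 0 := by
  apply prL_eq_zero
  intro k hk
  rw [ContinuousLinearMap.adjoint_inner_right]
  exact prL_inner _ _ _ _ (Submodule.mem_map_of_mem hk)

theorem lower_pt (U : H ≃L[ℂ] H) (K : Submodule ℂ H) (hK : IsClosed (K : Set H)) (h : H) :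
    ‖prL K hK (ContinuousLinearMap.adjoint (U : H →L[ℂ] H) h)‖ ≤
      ‖(U : H →L[ℂ] H)‖ * ‖prL _ (isClosed_map_equiv U K hK) h‖ := by
  have h1 := prL_adj_eq U K hK h
  rw [map_sub, map_sub, sub_eq_zero] at h1
  rw [h1]
  refine (prL_norm_le _ _ _).trans ?_
  refine (ContinuousLinearMap.le_opNorm _ _).trans ?_
  rw [LinearIsometryEquiv.norm_map]

theorem upper_pt (U : H ≃L[ℂ] H) (K : Submodule ℂ H) (hK : IsClosed (K : Set H)) (h : H) :
    ‖prL _ (isClosed_map_equiv U K hK) h‖ ≤ ‖(U.symm : H →L[ℂ] H)‖ *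
    ‖prL K hK (ContinuousLinearMap.adjoint (U : H →L[ℂ] H) h)‖ := by
  set q := prL _ (isClosed_map_equiv U K hK) h with hq
  have hmem : q ∈ K.map (U : H →ₗ[ℂ] H) := prL_mem _ _ _
  obtain ⟨f, hf, hfq⟩ := hmem
  have hfq' : (U : H →L[ℂ] H) f = q := hfq
  have hfs : f = (U.symm : H →L[ℂ] H) q := by rw [← hfq']; simp
  have hfn : ‖f‖ ≤ ‖(U.symm : H →L[ℂ] H)‖ * ‖q‖ := by
    rw [hfs]; exact ContinuousLinearMap.le_opNorm _ _
  set p := prL K hK (ContinuousLinearMap.adjoint (U : H →L[ℂ] H) h) with hp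
  have e1 : inner ℂ q h = inner ℂ q q := by
    have := prL_inner _ (isClosed_map_equiv U K hK) h q (prL_mem _ _ _)
    rwa [← hq, inner_sub_right, sub_eq_zero] at this
  have e2 : inner ℂ q h = inner ℂ f p := by
    have := prL_inner K hK (ContinuousLinearMap.adjoint (U : H →L[ℂ] H) h) f hf
    rw [← hp, inner_sub_right, sub_eq_zero, ContinuousLinearMap.adjoint_inner_right, hfq'] at this
    exact this
  have e3 : ‖q‖ ^ 2 ≤ ‖f‖ * ‖p‖ := by
    have := norm_inner_le_norm (𝕜 := ℂ) f p
    rw [← e2, e1, inner_self_eq_norm_sq_to_K] at this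
    simpa using this
  by_contra! hc
  have hp0 := norm_nonneg p
  have hqpos : 0 < ‖q‖ := lt_of_le_of_lt (by positivity) hc
  have : ‖f‖ * ‖p‖ ≤ ‖(U.symm : H →L[ℂ] H)‖ * ‖q‖ * ‖p‖ := by gcongr
  nlinarith

/-- Applying a measurable field of projections to a measurable map. -/
theorem aesm_apply (P : X → H →L[ℂ] H)
    (hP : ∀ h, AEStronglyMeasurable (fun x => P x h) μ)
    (g : X → H) (hg : AEStronglyMeasurable g μ) :
    AEStronglyMeasurable (fun x => P x (g x)) μ := by
  obtain ⟨g', hg', hgg⟩ := hg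
  have key : ∀ s : SimpleFunc X H, AEStronglyMeasurable (fun x => P x (s x)) μ := by
    intro s
    have : (fun x => P x (s x)) =
        fun x => ∑ y ∈ s.range, (s ⁻¹' {y}).indicator (fun x => P x y) x := by
      funext x
      rw [Finset.sum_eq_single (s x)]
      · simp
      · intro b _ hb
        simp [Set.indicator, hb.symm]
      · intro hn
        exact absurd (s.mem_range_self x) hn
    rw [this]
    refine Finset.aestronglyMeasurable_fun_sum _ fun y _ => ?_
    exact (hP y).indicator (s.measurableSet_fiber y)
  have h1 : AEStronglyMeasurable (fun x => P x (g' x)) μ := by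
    refine aestronglyMeasurable_of_tendsto_ae Filter.atTop (fun n => key (hg'.approx n)) ?_
    refine Filter.Eventually.of_forall fun x => ?_
    exact ((P x).continuous.tendsto _).comp (hg'.tendsto_approx x)
  refine h1.congr ?_
  filter_upwards [hgg] with x hx
  rw [hx]

theorem step_le (U : H ≃L[ℂ] H) (t : ℝ) (ht : t = (‖(U : H →L[ℂ] H)‖ ^ 2 + 1)⁻¹) (e : H) :
    ‖e - (t : ℂ) • ContinuousLinearMap.adjoint (U : H →L[ℂ] H) ((U : H →L[ℂ] H) e)‖ ^ 2 ≤
      (1 - t * (‖(U.symm : H →L[ℂ] H)‖ ^ 2 + 1)⁻¹) * ‖e‖ ^ 2 := by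
  have htpos : 0 < t := by rw [ht]; positivity
  set w := (U : H →L[ℂ] H) e with hw
  set z := ContinuousLinearMap.adjoint (U : H →L[ℂ] H) w with hz
  have hzn : ‖z‖ ^ 2 ≤ ‖(U : H →L[ℂ] H)‖ ^ 2 * ‖w‖ ^ 2 := by
    rw [← mul_pow]
    gcongr
    refine (ContinuousLinearMap.le_opNorm _ _).trans ?_
    rw [LinearIsometryEquiv.norm_map]
  have hen : ‖e‖ ^ 2 ≤ ‖(U.symm : H →L[ℂ] H)‖ ^ 2 * ‖w‖ ^ 2 := by
    rw [← mul_pow]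
    gcongr
    have : e = (U.symm : H →L[ℂ] H) w := by rw [hw]; simp
    conv_lhs => rw [this]
    exact ContinuousLinearMap.le_opNorm _ _
  have hin : RCLike.re (inner ℂ e ((t : ℂ) • z)) = t * ‖w‖ ^ 2 := by
    rw [inner_smul_right, hz, ContinuousLinearMap.adjoint_inner_right, ← hw,
      inner_self_eq_norm_sq_to_K]
    have hc : ((t : ℂ) * ((‖w‖ : ℝ) : ℂ) ^ 2) = ((t * ‖w‖ ^ 2 : ℝ) : ℂ) := by push_cast; rfl
    exact (congrArg Complex.re hc).trans (Complex.ofReal_re _)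
  rw [norm_sub_sq (𝕜 := ℂ), hin, norm_smul, mul_pow]
  have : ‖(t : ℂ)‖ ^ 2 = t ^ 2 := by simp
  rw [this]
  have h1 : t * (‖(U : H →L[ℂ] H)‖ ^ 2 + 1) = 1 := by rw [ht]; field_simp
  have h2 : t ^ 2 * ‖z‖ ^ 2 ≤ t * ‖w‖ ^ 2 := by
    have a1 : t ^ 2 * ‖z‖ ^ 2 ≤ t ^ 2 * (‖(U : H →L[ℂ] H)‖ ^ 2 * ‖w‖ ^ 2) := by gcongr
    have a2 : t * ‖(U : H →L[ℂ] H)‖ ^ 2 ≤ 1 := by nlinarith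
    have a3 : (t * ‖(U : H →L[ℂ] H)‖ ^ 2) * (t * ‖w‖ ^ 2) ≤ 1 * (t * ‖w‖ ^ 2) := by gcongr
    nlinarith
  have h3 : (‖(U.symm : H →L[ℂ] H)‖ ^ 2 + 1)⁻¹ * ‖e‖ ^ 2 ≤ ‖w‖ ^ 2 := by
    rw [inv_mul_le_iff₀ (by positivity)]
    nlinarith [sq_nonneg ‖w‖]
  have h4 := mul_le_mul_of_nonneg_left h3 htpos.le
  nlinarith

/-- Gradient descent iteration for the projection on `U K`. -/
noncomputable def iter (U : H ≃L[ℂ] H) (P : H →L[ℂ] H) (t : ℝ) (h : H) : ℕ → H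
  | 0 => 0
  | n + 1 => P (iter U P t h n + (t : ℂ) • ContinuousLinearMap.adjoint (U : H →L[ℂ] H)
      (h - (U : H →L[ℂ] H) (iter U P t h n)))

theorem iter_tendsto (U : H ≃L[ℂ] H) (K : Submodule ℂ H) (hK : IsClosed (K : Set H)) (h : H)
    (t : ℝ) (ht : t = (‖(U : H →L[ℂ] H)‖ ^ 2 + 1)⁻¹) :
    Filter.Tendsto (fun n => (U : H →L[ℂ] H) (iter U (prL K hK) t h n)) Filter.atTop
      (nhds (prL _ (isClosed_map_equiv U K hK) h)) := by
  have hmem := prL_mem _ (isClosed_map_equiv U K hK) h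
  have h0 := prL_adj_eq U K hK h
  obtain ⟨f, hf, hfq⟩ := hmem
  have hfq' : (U : H →L[ℂ] H) f = prL _ (isClosed_map_equiv U K hK) h := hfq
  rw [← hfq'] at h0 ⊢
  refine (((U : H →L[ℂ] H).continuous.tendsto f).comp ?_)
  set r := 1 - t * (‖(U.symm : H →L[ℂ] H)‖ ^ 2 + 1)⁻¹ with hr
  have htpos : 0 < t := by rw [ht]; positivity
  have ht1 : t ≤ 1 := by
    rw [ht]; exact inv_le_one_of_one_le₀ (by nlinarith [sq_nonneg ‖(U : H →L[ℂ] H)‖])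
  have hs1 : (‖(U.symm : H →L[ℂ] H)‖ ^ 2 + 1)⁻¹ ≤ 1 :=
    inv_le_one_of_one_le₀ (by nlinarith [sq_nonneg ‖(U.symm : H →L[ℂ] H)‖])
  have hspos : 0 < (‖(U.symm : H →L[ℂ] H)‖ ^ 2 + 1)⁻¹ := by positivity
  have hr1 : r < 1 := by rw [hr]; nlinarith [mul_pos htpos hspos]
  have hr0 : 0 ≤ r := by rw [hr]; nlinarith
  have hb : ∀ n, ‖iter U (prL K hK) t h n - f‖ ^ 2 ≤ r ^ n * ‖f‖ ^ 2 := by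
    intro n
    induction n with
    | zero => simp [iter]
    | succ n ih =>
      have : iter U (prL K hK) t h (n + 1) - f = prL K hK
          ((iter U (prL K hK) t h n - f) - (t : ℂ) •
            ContinuousLinearMap.adjoint (U : H →L[ℂ] H)
              ((U : H →L[ℂ] H) (iter U (prL K hK) t h n - f))) := by
        have hPf := prL_of_mem K hK f hf
        rw [iter]
        simp only [map_sub, map_add, map_smul, sub_eq_zero, smul_sub] at h0 ⊢
        rw [h0, hPf]
        abel
      rw [this]
      calc _ ≤ ‖(iter U (prL K hK) t h n - f) - (t : ℂ) •
            ContinuousLinearMap.adjoint (U : H →L[ℂ] H)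
              ((U : H →L[ℂ] H) (iter U (prL K hK) t h n - f))‖ ^ 2 := by
            gcongr; exact prL_norm_le _ _ _
        _ ≤ r * ‖iter U (prL K hK) t h n - f‖ ^ 2 := step_le U t ht _
        _ ≤ r * (r ^ n * ‖f‖ ^ 2) := by gcongr
        _ = _ := by ring
  rw [tendsto_iff_norm_sub_tendsto_zero]
  have hsq : Filter.Tendsto (fun n => ‖iter U (prL K hK) t h n - f‖ ^ 2) Filter.atTop (nhds 0) := by
    refine squeeze_zero (fun n => by positivity) hb ?_
    simpa using (tendsto_pow_atTop_nhds_zero_of_lt_one hr0 hr1).mul_const (‖f‖ ^ 2)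
  have := hsq.sqrt
  simpa using this

theorem meas_map (F : X → Submodule ℂ H) (hF : ∀ x, IsClosed ((F x : Set H)))
    (hFm : ∀ h : H, AEStronglyMeasurable (fun x => cProj (F x) (hF x) h) μ)
    (U : H ≃L[ℂ] H) (h : H) :
    AEStronglyMeasurable (fun x => cProj ((F x).map (U : H →ₗ[ℂ] H))
      (isClosed_map_equiv U (F x) (hF x)) h) μ := by
  have hit : ∀ n, AEStronglyMeasurable (fun x => iter U (prL (F x) (hF x))
      ((‖(U : H →L[ℂ] H)‖ ^ 2 + 1)⁻¹) h n) μ := by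
    intro n
    induction n with
    | zero => exact aestronglyMeasurable_const
    | succ n ih =>
      refine aesm_apply (fun x => prL (F x) (hF x)) hFm _ ?_
      refine ih.add (AEStronglyMeasurable.const_smul ?_ _)
      refine (ContinuousLinearMap.continuous _).comp_aestronglyMeasurable ?_
      exact aestronglyMeasurable_const.sub
        ((U : H →L[ℂ] H).continuous.comp_aestronglyMeasurable ih)
  refine aestronglyMeasurable_of_tendsto_ae Filter.atTop
    (fun n => (U : H →L[ℂ] H).continuous.comp_aestronglyMeasurable (hit n)) ?_
  exact Filter.Eventually.of_forall fun x => iter_tendsto U (F x) (hF x) h _ rfl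

end helpers

/-- If `(F i, v i)` is c-fusion woven for `H` with universal bounds `A, B`
and `U` is an invertible bounded operator on `H`, then `(U (F i ·), v i)` is c-fusion woven
for `H` with universal bounds `A‖U⁻¹‖⁻²‖U‖⁻²` and `B‖U⁻¹‖²‖U‖²`. -/
theorem cFusionWoven_invertible_operator
    {X : Type*} [MeasurableSpace X] (μ : Measure X)
    {H : Type*} [NormedAddCommGroup H] [InnerProductSpace ℂ H] [CompleteSpace H]
    (m : ℕ) (F : Fin m → X → Submodule ℂ H) (hF : ∀ i x, IsClosed ((F i x : Set H)))
    (v : Fin m → X → ℝ) (hv_pos : ∀ i x, 0 < v i x) (hv_meas : ∀ i, Measurable (v i))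
    (hFmeas : ∀ (i : Fin m) (h : H),
      AEStronglyMeasurable (fun x => cProj (F i x) (hF i x) h) μ)
    (hInt : ∀ (i : Fin m) (h : H),
      Integrable (fun x => (v i x) ^ 2 * ‖cProj (F i x) (hF i x) h‖ ^ 2) μ)
    (A B : ℝ) (hA : 0 < A) (hAB : A ≤ B)
    (hwoven : ∀ (σ : Fin m → Set X), (∀ i, MeasurableSet (σ i)) →
      Pairwise (Function.onFun Disjoint σ) → (⋃ i, σ i) = Set.univ →
      ∀ h : H,
        A * ‖h‖ ^ 2 ≤ ∑ i, ∫ x in σ i, (v i x) ^ 2 * ‖cProj (F i x) (hF i x) h‖ ^ 2 ∂μ ∧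
        ∑ i, ∫ x in σ i, (v i x) ^ 2 * ‖cProj (F i x) (hF i x) h‖ ^ 2 ∂μ ≤ B * ‖h‖ ^ 2)
    (U : H ≃L[ℂ] H) :
    ∀ (σ : Fin m → Set X), (∀ i, MeasurableSet (σ i)) →
      Pairwise (Function.onFun Disjoint σ) → (⋃ i, σ i) = Set.univ →
      ∀ h : H,
        A * (‖(U.symm : H →L[ℂ] H)‖ ^ 2)⁻¹ * (‖(U : H →L[ℂ] H)‖ ^ 2)⁻¹ * ‖h‖ ^ 2 ≤
          ∑ i, ∫ x in σ i, (v i x) ^ 2 *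
            ‖cProj ((F i x).map (U : H →ₗ[ℂ] H)) (isClosed_map_equiv U (F i x) (hF i x)) h‖ ^ 2 ∂μ ∧
        ∑ i, ∫ x in σ i, (v i x) ^ 2 *
            ‖cProj ((F i x).map (U : H →ₗ[ℂ] H)) (isClosed_map_equiv U (F i x) (hF i x)) h‖ ^ 2 ∂μ ≤
          B * ‖(U.symm : H →L[ℂ] H)‖ ^ 2 * ‖(U : H →L[ℂ] H)‖ ^ 2 * ‖h‖ ^ 2 := by
  intro σ hσ hd hu h
  set g := ContinuousLinearMap.adjoint (U : H →L[ℂ] H) h with hg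
  set M := ‖(U : H →L[ℂ] H)‖ with hM
  set N := ‖(U.symm : H →L[ℂ] H)‖ with hN
  have hM0 : 0 ≤ M := norm_nonneg _
  have hN0 : 0 ≤ N := norm_nonneg _
  obtain ⟨hlo, hup⟩ := hwoven σ hσ hd hu g
  have hgn : ‖g‖ ≤ M * ‖h‖ := by
    refine (ContinuousLinearMap.le_opNorm _ _).trans ?_
    rw [LinearIsometryEquiv.norm_map]
  have hhn : ‖h‖ ≤ N * ‖g‖ := by
    have e : h = ContinuousLinearMap.adjoint (U.symm : H →L[ℂ] H) g := by
      refine ext_inner_left ℂ fun k => ?_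
      rw [ContinuousLinearMap.adjoint_inner_right, hg, ContinuousLinearMap.adjoint_inner_right]
      simp
    conv_lhs => rw [e]
    refine (ContinuousLinearMap.le_opNorm _ _).trans ?_
    rw [LinearIsometryEquiv.norm_map]
  have hub : ∀ i x, (v i x) ^ 2 * ‖cProj ((F i x).map (U : H →ₗ[ℂ] H))
      (isClosed_map_equiv U (F i x) (hF i x)) h‖ ^ 2 ≤
      N ^ 2 * ((v i x) ^ 2 * ‖cProj (F i x) (hF i x) g‖ ^ 2) := by
    intro i x
    have h1 := pow_le_pow_left₀ (norm_nonneg _) (upper_pt U (F i x) (hF i x) h) 2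
    rw [mul_pow] at h1
    have h2 := mul_le_mul_of_nonneg_left h1 (sq_nonneg (v i x))
    rw [cProj_eq_prL, cProj_eq_prL]
    linarith
  have hlb : ∀ i x, (v i x) ^ 2 * ‖cProj (F i x) (hF i x) g‖ ^ 2 ≤
      M ^ 2 * ((v i x) ^ 2 * ‖cProj ((F i x).map (U : H →ₗ[ℂ] H))
      (isClosed_map_equiv U (F i x) (hF i x)) h‖ ^ 2) := by
    intro i x
    have h1 := pow_le_pow_left₀ (norm_nonneg _) (lower_pt U (F i x) (hF i x) h) 2
    rw [mul_pow] at h1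
    have h2 := mul_le_mul_of_nonneg_left h1 (sq_nonneg (v i x))
    rw [cProj_eq_prL, cProj_eq_prL]
    linarith
  have hI : ∀ i, Integrable (fun x => (v i x) ^ 2 * ‖cProj ((F i x).map (U : H →ₗ[ℂ] H))
      (isClosed_map_equiv U (F i x) (hF i x)) h‖ ^ 2) μ := by
    intro i
    refine ((hInt i g).const_mul (N ^ 2)).mono' ?_ ?_
    · exact ((hv_meas i).pow_const 2).aestronglyMeasurable.mul
        ((meas_map (F i) (hF i) (hFmeas i) U h).norm.pow 2)
    · refine Filter.Eventually.of_forall fun x => ?_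
      rw [Real.norm_of_nonneg (by positivity)]
      exact hub i x
  set T := ∑ i, ∫ x in σ i, (v i x) ^ 2 * ‖cProj ((F i x).map (U : H →ₗ[ℂ] H))
      (isClosed_map_equiv U (F i x) (hF i x)) h‖ ^ 2 ∂μ with hT
  set S := ∑ i, ∫ x in σ i, (v i x) ^ 2 * ‖cProj (F i x) (hF i x) g‖ ^ 2 ∂μ with hS
  have hT0 : 0 ≤ T := Finset.sum_nonneg fun i _ => integral_nonneg fun x => by positivity
  have hST : S ≤ M ^ 2 * T := by
    rw [hS, hT, Finset.mul_sum]
    refine Finset.sum_le_sum fun i _ => ?_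
    rw [← integral_const_mul]
    exact integral_mono (hInt i g).integrableOn ((hI i).integrableOn.const_mul _) (hlb i)
  have hTS : T ≤ N ^ 2 * S := by
    rw [hS, hT, Finset.mul_sum]
    refine Finset.sum_le_sum fun i _ => ?_
    rw [← integral_const_mul]
    exact integral_mono (hI i).integrableOn ((hInt i g).integrableOn.const_mul _) (hub i)
  have hg2 : ‖g‖ ^ 2 ≤ M ^ 2 * ‖h‖ ^ 2 := by
    rw [← mul_pow]; gcongr
  have hh2 : ‖h‖ ^ 2 ≤ N ^ 2 * ‖g‖ ^ 2 := by
    rw [← mul_pow]; gcongr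
  constructor
  · rcases hM0.eq_or_lt with h0 | hMp
    · rw [← h0]; simpa using hT0
    rcases hN0.eq_or_lt with h0 | hNp
    · rw [← h0]; simpa using hT0
    have : A * (N ^ 2)⁻¹ * (M ^ 2)⁻¹ * ‖h‖ ^ 2 = (A * ‖h‖ ^ 2) / (N ^ 2 * M ^ 2) := by
      field_simp
    rw [this, div_le_iff₀ (by positivity)]
    calc A * ‖h‖ ^ 2 ≤ A * (N ^ 2 * ‖g‖ ^ 2) := by gcongr
      _ = N ^ 2 * (A * ‖g‖ ^ 2) := by ring
      _ ≤ N ^ 2 * (M ^ 2 * T) := 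
        mul_le_mul_of_nonneg_left (hlo.trans hST) (sq_nonneg N)
      _ = _ := by ring
  · have hB : 0 ≤ B := hA.le.trans hAB
    calc T ≤ N ^ 2 * S := hTS
      _ ≤ N ^ 2 * (B * ‖g‖ ^ 2) := by gcongr
      _ ≤ N ^ 2 * (B * (M ^ 2 * ‖h‖ ^ 2)) := by gcongr
      _ = _ := by ring
end

section
/- For each i ∈ {1,…,m}, let (F_i, v_i) be a c-fusion frame for H with bounds A_i and B_i. Suppose there exists a measurable subset Y ⊆ X such that the restricted family (F_i(x), v_i(x))_{x∈Y, i∈{1,…,m}} is c-fusion woven for H with universal bounds A and B, i.e. for every partition {σ_i}_{i=1}^m of Y into pairwise disjoint measurable sets, A‖h‖² ≤ Σ_i ∫_{σ_i} v_i(x)²‖π_{F_i(x)}h‖² dμ(x) ≤ B‖h‖² for all h ∈ H. Then the full family (F_i, v_i), i ∈ {1,…,m}, is c-fusion woven for H with universal bounds A and Σ_{i=1}^m B_i. -/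
open MeasureTheory

/-- If each `(F i, v i)` is a c-fusion frame for `H` with bounds `A i, B i`
and the family restricted to a measurable subset `Y ⊆ X` is c-fusion woven with universal
bounds `A, B`, then the full family is c-fusion woven for `H` with universal bounds
`A` and `∑ i, B i`. -/
theorem cFusionWoven_of_woven_on_subset
    {X : Type*} [MeasurableSpace X] (μ : Measure X)
    {H : Type*} [NormedAddCommGroup H] [InnerProductSpace ℂ H] [CompleteSpace H]
    (m : ℕ) (F : Fin m → X → Submodule ℂ H) (hF : ∀ i x, IsClosed ((F i x : Set H)))
    (v : Fin m → X → ℝ) (hv_pos : ∀ i x, 0 < v i x) (hv_meas : ∀ i, Measurable (v i))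
    (hFmeas : ∀ (i : Fin m) (h : H),
      AEStronglyMeasurable (fun x => cProj (F i x) (hF i x) h) μ)
    (hInt : ∀ (i : Fin m) (h : H),
      Integrable (fun x => (v i x) ^ 2 * ‖cProj (F i x) (hF i x) h‖ ^ 2) μ)
    (A B : Fin m → ℝ) (hA_pos : ∀ i, 0 < A i) (hAB : ∀ i, A i ≤ B i)
    (hframe : ∀ (i : Fin m) (h : H),
      A i * ‖h‖ ^ 2 ≤ ∫ x, (v i x) ^ 2 * ‖cProj (F i x) (hF i x) h‖ ^ 2 ∂μ ∧
      ∫ x, (v i x) ^ 2 * ‖cProj (F i x) (hF i x) h‖ ^ 2 ∂μ ≤ B i * ‖h‖ ^ 2)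
    (Y : Set X) (hY : MeasurableSet Y)
    (A' B' : ℝ) (hA' : 0 < A') (hA'B' : A' ≤ B')
    (hwovenY : ∀ (σ : Fin m → Set X), (∀ i, MeasurableSet (σ i)) →
      Pairwise (Function.onFun Disjoint σ) → (⋃ i, σ i) = Y →
      ∀ h : H,
        A' * ‖h‖ ^ 2 ≤ ∑ i, ∫ x in σ i, (v i x) ^ 2 * ‖cProj (F i x) (hF i x) h‖ ^ 2 ∂μ ∧
        ∑ i, ∫ x in σ i, (v i x) ^ 2 * ‖cProj (F i x) (hF i x) h‖ ^ 2 ∂μ ≤ B' * ‖h‖ ^ 2) :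
    ∀ (σ : Fin m → Set X), (∀ i, MeasurableSet (σ i)) →
      Pairwise (Function.onFun Disjoint σ) → (⋃ i, σ i) = Set.univ →
      ∀ h : H,
        A' * ‖h‖ ^ 2 ≤ ∑ i, ∫ x in σ i, (v i x) ^ 2 * ‖cProj (F i x) (hF i x) h‖ ^ 2 ∂μ ∧
        ∑ i, ∫ x in σ i, (v i x) ^ 2 * ‖cProj (F i x) (hF i x) h‖ ^ 2 ∂μ ≤
          (∑ i, B i) * ‖h‖ ^ 2 := by
  intro σ hσ hd hU h
  have hnn : ∀ i, ∀ x, 0 ≤ (v i x) ^ 2 * ‖cProj (F i x) (hF i x) h‖ ^ 2 :=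
    fun i x => by positivity
  constructor
  · refine le_trans (hwovenY (fun i => σ i ∩ Y) (fun i => (hσ i).inter hY) ?_ ?_ h).1 ?_
    · intro i j hij
      exact (hd hij).mono Set.inter_subset_left Set.inter_subset_left
    · rw [← Set.iUnion_inter, hU, Set.univ_inter]
    · refine Finset.sum_le_sum fun i _ => ?_
      exact setIntegral_mono_set (hInt i h).integrableOn
        (Filter.Eventually.of_forall (hnn i))
        (Filter.Eventually.of_forall Set.inter_subset_left)
  · rw [Finset.sum_mul]
    refine Finset.sum_le_sum fun i _ => ?_
    exact (setIntegral_le_integral (hInt i h)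
      (Filter.Eventually.of_forall (hnn i))).trans (hframe i h).2
end

section
/- Let μ be σ-finite, and let (F,v) and (G,w) be c-fusion frames for H with optimal (i.e. smallest possible) upper frame bounds B₁ and B₂ respectively, meaning B₁ = sup_{‖h‖=1} ∫_X v(x)²‖π_{F(x)}h‖² dμ(x) and B₂ = sup_{‖h‖=1} ∫_X w(x)²‖π_{G(x)}h‖² dμ(x). Suppose (F,v) and (G,w) are c-fusion woven for H. Then B₁ + B₂ is not the optimal universal upper frame bound for the weavings: sup over measurable σ ⊆ X and h ∈ H with ‖h‖ = 1 of ∫_σ v(x)²‖π_{F(x)}h‖² dμ(x) + ∫_{X∖σ} w(x)²‖π_{G(x)}h‖² dμ(x) is strictly less than B₁ + B₂. -/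
open MeasureTheory

/-- Let `μ` be σ-finite and let `(F, v)` and `(G, w)` be c-fusion frames
for `H` with optimal upper frame bounds `B₁` and `B₂`, respectively. If they are c-fusion
woven, then `B₁ + B₂` is not the optimal universal upper frame bound of the weavings: the
supremum of the weaving sums over unit vectors is strictly less than `B₁ + B₂`. -/
theorem optimal_upper_bound_of_weaving_lt
    {X : Type*} [MeasurableSpace X] (μ : Measure X) [SigmaFinite μ]
    {H : Type*} [NormedAddCommGroup H] [InnerProductSpace ℂ H] [CompleteSpace H]
    [Nontrivial H]
    (F G : X → Submodule ℂ H) (hF : ∀ x, IsClosed ((F x : Set H)))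
    (hG : ∀ x, IsClosed ((G x : Set H)))
    (v w : X → ℝ) (hv_pos : ∀ x, 0 < v x) (hw_pos : ∀ x, 0 < w x)
    (hv_meas : Measurable v) (hw_meas : Measurable w)
    (hFmeas : ∀ h : H, AEStronglyMeasurable (fun x => cProj (F x) (hF x) h) μ)
    (hGmeas : ∀ h : H, AEStronglyMeasurable (fun x => cProj (G x) (hG x) h) μ)
    (hIntF : ∀ h : H, Integrable (fun x => (v x) ^ 2 * ‖cProj (F x) (hF x) h‖ ^ 2) μ)
    (hIntG : ∀ h : H, Integrable (fun x => (w x) ^ 2 * ‖cProj (G x) (hG x) h‖ ^ 2) μ)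
    -- `(F, v)` and `(G, w)` are c-fusion frames:
    (A₁ A₂ B₁ B₂ : ℝ) (hA₁ : 0 < A₁) (hA₂ : 0 < A₂)
    (hF_frame : ∀ h : H,
      A₁ * ‖h‖ ^ 2 ≤ ∫ x, (v x) ^ 2 * ‖cProj (F x) (hF x) h‖ ^ 2 ∂μ ∧
      ∫ x, (v x) ^ 2 * ‖cProj (F x) (hF x) h‖ ^ 2 ∂μ ≤ B₁ * ‖h‖ ^ 2)
    (hG_frame : ∀ h : H,
      A₂ * ‖h‖ ^ 2 ≤ ∫ x, (w x) ^ 2 * ‖cProj (G x) (hG x) h‖ ^ 2 ∂μ ∧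
      ∫ x, (w x) ^ 2 * ‖cProj (G x) (hG x) h‖ ^ 2 ∂μ ≤ B₂ * ‖h‖ ^ 2)
    -- `B₁` and `B₂` are the *optimal* upper frame bounds:
    (hB₁_opt : IsLUB {r : ℝ | ∃ h : H, ‖h‖ = 1 ∧
      r = ∫ x, (v x) ^ 2 * ‖cProj (F x) (hF x) h‖ ^ 2 ∂μ} B₁)
    (hB₂_opt : IsLUB {r : ℝ | ∃ h : H, ‖h‖ = 1 ∧
      r = ∫ x, (w x) ^ 2 * ‖cProj (G x) (hG x) h‖ ^ 2 ∂μ} B₂)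
    -- `(F, v)` and `(G, w)` are c-fusion woven with universal bounds `A ≤ B`:
    (A B : ℝ) (hA : 0 < A) (hAB : A ≤ B)
    (hwoven : ∀ σ : Set X, MeasurableSet σ → ∀ h : H,
      A * ‖h‖ ^ 2 ≤ (∫ x in σ, (v x) ^ 2 * ‖cProj (F x) (hF x) h‖ ^ 2 ∂μ) +
          (∫ x in σᶜ, (w x) ^ 2 * ‖cProj (G x) (hG x) h‖ ^ 2 ∂μ) ∧
      (∫ x in σ, (v x) ^ 2 * ‖cProj (F x) (hF x) h‖ ^ 2 ∂μ) +
          (∫ x in σᶜ, (w x) ^ 2 * ‖cProj (G x) (hG x) h‖ ^ 2 ∂μ) ≤ B * ‖h‖ ^ 2) :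
    sSup {r : ℝ | ∃ σ : Set X, MeasurableSet σ ∧ ∃ h : H, ‖h‖ = 1 ∧
        r = (∫ x in σ, (v x) ^ 2 * ‖cProj (F x) (hF x) h‖ ^ 2 ∂μ) +
          (∫ x in σᶜ, (w x) ^ 2 * ‖cProj (G x) (hG x) h‖ ^ 2 ∂μ)} < B₁ + B₂ := by
  refine lt_of_le_of_lt (b := B₁ + B₂ - A) (csSup_le ?_ ?_) (by linarith)
  · obtain ⟨h, hh⟩ := exists_norm_eq H (zero_le_one (α := ℝ))
    exact ⟨_, ∅, MeasurableSet.empty, h, hh, rfl⟩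
  · rintro r ⟨σ, hσ, h, hh, rfl⟩
    have h1 := (hwoven σᶜ hσ.compl h).1
    have h2 := integral_add_compl hσ (hIntF h)
    have h3 := integral_add_compl hσ (hIntG h)
    have h4 := (hF_frame h).2
    have h5 := (hG_frame h).2
    rw [compl_compl] at h1
    rw [hh] at h1 h4 h5
    linarith
end
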